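/- arXiv:2104.12066 — 6 statements merged into one kernel-verified Lean document; each statement's English description precedes it below -/
import Mathlib

section
/- Let k > 0 be an integer and let (ℱ, 𝒱, wgt) be a k-fat finite weighted string-hypergraph with total edge weight δ. Let 𝒱* be the set of prefix-minimal elements of 𝒱 (those elements of 𝒱 having no proper prefix in 𝒱). Then Σ_{σ* ∈ 𝒱*} ( Σ_{σ ∈ 𝒱 with σ* a prefix of σ} ewt(σ) ) ≥ k·δ. -/
/-- **Fatness lemma for kernels of string-hypergraphs.**
Let `(ℱ, 𝒱, wgt)` be a `k`-fat finite weighted string-hypergraph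
(vertices are binary strings, the weight of a vertex `σ` is `2^{-|σ|}`),
with total edge weight `δ`.  Let `𝒱*` be the set of prefix-minimal vertices.
Then the sum over `σ* ∈ 𝒱*` of the sums of the edge-weights of the vertices
extending `σ*` is at least `k·δ`. -/
theorem kernel_fatness (k : ℕ) (hk : 0 < k)
    (𝒱 : Finset (List Bool)) (ℱ : Finset (Finset (List Bool)))
    (wgt : Finset (List Bool) → ℝ)
    (hsub : ∀ E ∈ ℱ, E ⊆ 𝒱) (hw : ∀ E ∈ ℱ, 0 ≤ wgt E)
    (hfat : ∀ E ∈ ℱ, k ≤ E.card) :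
    (k : ℝ) * (∑ E ∈ ℱ, wgt E) ≤
      ∑ σs ∈ 𝒱.filter (fun σs => ∀ τ ∈ 𝒱, τ <+: σs → τ = σs),
        ∑ σ ∈ 𝒱.filter (fun σ => σs <+: σ),
          ∑ E ∈ ℱ.filter (fun E => σ ∈ E), wgt E := by
  have hmin : ∀ σ ∈ 𝒱, ∃ m ∈ 𝒱, (∀ τ ∈ 𝒱, τ <+: m → τ = m) ∧ m <+: σ := by
    intro σ hσ
    obtain ⟨m, hm, hmm⟩ := Finset.exists_min_image (𝒱.filter (fun τ => τ <+: σ)) List.length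
      ⟨σ, Finset.mem_filter.2 ⟨hσ, List.prefix_refl σ⟩⟩
    rw [Finset.mem_filter] at hm
    refine ⟨m, hm.1, fun τ hτ hp => ?_, hm.2⟩
    exact hp.eq_of_length_le (hmm τ (Finset.mem_filter.2 ⟨hτ, hp.trans hm.2⟩))
  have hnn : ∀ σ, 0 ≤ ∑ E ∈ ℱ.filter (fun E => σ ∈ E), wgt E := fun σ =>
    Finset.sum_nonneg fun E hE => hw E (Finset.mem_filter.1 hE).1
  calc (k : ℝ) * (∑ E ∈ ℱ, wgt E) ≤ ∑ E ∈ ℱ, ∑ σ ∈ E, wgt E := by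
        rw [Finset.mul_sum]
        refine Finset.sum_le_sum fun E hE => ?_
        rw [Finset.sum_const, nsmul_eq_mul]
        exact mul_le_mul_of_nonneg_right (by exact_mod_cast hfat E hE) (hw E hE)
    _ = ∑ σ ∈ 𝒱, ∑ E ∈ ℱ.filter (fun E => σ ∈ E), wgt E := by
        refine Finset.sum_comm' fun E σ => ?_
        rw [Finset.mem_filter]
        exact ⟨fun h => ⟨⟨h.1, h.2⟩, hsub E h.1 h.2⟩, fun h => h.1⟩
    _ ≤ ∑ σ ∈ 𝒱, ∑ σs ∈ (𝒱.filter (fun σs => ∀ τ ∈ 𝒱, τ <+: σs → τ = σs)).filter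
          (fun σs => σs <+: σ), ∑ E ∈ ℱ.filter (fun E => σ ∈ E), wgt E := by
        refine Finset.sum_le_sum fun σ hσ => ?_
        obtain ⟨m, hm, h1, h2⟩ := hmin σ hσ
        exact Finset.single_le_sum
          (f := fun _ => ∑ E ∈ ℱ.filter (fun E => σ ∈ E), wgt E) (fun _ _ => hnn σ)
          (Finset.mem_filter.2 ⟨Finset.mem_filter.2 ⟨hm, h1⟩, h2⟩)
    _ = _ := by
        refine Finset.sum_comm' fun σ σs => ?_
        simp only [Finset.mem_filter]
        tauto
end

section
/- Let k > 0 be an integer and let (ℱ, 𝒱, wgt) be a k-fat finite weighted string-hypergraph whose vertex set 𝒱 is nonempty and prefix-free (no vertex is a proper prefix of another vertex), with total edge weight δ. Then there exists a vertex σ ∈ 𝒱 such that δ·k·2^{-|σ|} ≤ ewt(σ). -/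
theorem kraft_aux (n : ℕ) : ∀ V : Finset (List Bool), (∀ σ ∈ V, σ.length < n) →
    (∀ σ ∈ V, ∀ τ ∈ V, σ <+: τ → σ = τ) → ∑ σ ∈ V, (2 : ℝ)⁻¹ ^ σ.length ≤ 1 := by
  induction n with
  | zero =>
    intro V h _
    have : V = ∅ := Finset.eq_empty_of_forall_notMem (fun σ hσ => by simpa using h σ hσ)
    simp [this]
  | succ n ih =>
    intro V h hpf
    by_cases h0 : ([] : List Bool) ∈ V
    · have : V = {[]} := by
        ext τ
        rw [Finset.mem_singleton]
        constructor
        · intro hτ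
          exact (hpf [] h0 τ hτ (List.nil_prefix)).symm
        · rintro rfl
          exact h0
      simp [this]
    · have hinj : ∀ b : Bool, Function.Injective (List.cons b) := fun b x y hxy => by
        simpa using hxy
      have key : ∀ b : Bool,
          ∑ σ ∈ V.preimage (List.cons b) (hinj b).injOn, (2 : ℝ)⁻¹ ^ σ.length ≤ 1 := by
        intro b
        apply ih
        · intro σ hσ
          have := h _ (Finset.mem_preimage.1 hσ)
          simpa using this
        · intro σ hσ τ hτ hp
          have := hpf _ (Finset.mem_preimage.1 hσ) _ (Finset.mem_preimage.1 hτ)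
            ((List.prefix_cons_inj b).2 hp)
          simpa using this
      have hV : V = (V.preimage (List.cons true) (hinj true).injOn).image (List.cons true) ∪
          (V.preimage (List.cons false) (hinj false).injOn).image (List.cons false) := by
        ext τ
        rcases τ with _ | ⟨b, τ⟩
        · simp [h0]
        · cases b <;> simp
      have hd : Disjoint
          ((V.preimage (List.cons true) (hinj true).injOn).image (List.cons true))
          ((V.preimage (List.cons false) (hinj false).injOn).image (List.cons false)) := by
        rw [Finset.disjoint_left]
        intro τ h1 h2
        obtain ⟨x, -, rfl⟩ := Finset.mem_image.1 h1
        obtain ⟨y, -, hy⟩ := Finset.mem_image.1 h2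
        simp at hy
      rw [hV, Finset.sum_union hd, Finset.sum_image (hinj true).injOn,
        Finset.sum_image (hinj false).injOn]
      simp only [List.length_cons, pow_succ, ← Finset.sum_mul]
      linarith [key true, key false]

theorem kraft_pf (V : Finset (List Bool))
    (hpf : ∀ σ ∈ V, ∀ τ ∈ V, σ <+: τ → σ = τ) : ∑ σ ∈ V, (2 : ℝ)⁻¹ ^ σ.length ≤ 1 :=
  kraft_aux (V.sup List.length + 1) V
    (fun _ hσ => Nat.lt_succ_of_le (Finset.le_sup (f := List.length) hσ)) hpf

/-- **Light vertices in kernels.**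
Let `(ℱ, 𝒱, wgt)` be a `k`-fat finite weighted string-hypergraph whose
(nonempty) vertex set `𝒱` is prefix-free, with total edge weight `δ`.
Then some vertex `σ ∈ 𝒱` satisfies `δ·k·2^{-|σ|} ≤ ewt(σ)`, i.e. its weight
`2^{-|σ|}` is at most `ewt(σ)/(δ·k)`. -/
theorem light_vertex (k : ℕ) (hk : 0 < k)
    (𝒱 : Finset (List Bool)) (h𝒱 : 𝒱.Nonempty)
    (hpf : ∀ σ ∈ 𝒱, ∀ τ ∈ 𝒱, σ <+: τ → σ = τ)
    (ℱ : Finset (Finset (List Bool))) (wgt : Finset (List Bool) → ℝ)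
    (hsub : ∀ E ∈ ℱ, E ⊆ 𝒱) (hw : ∀ E ∈ ℱ, 0 ≤ wgt E)
    (hfat : ∀ E ∈ ℱ, k ≤ E.card) :
    ∃ σ ∈ 𝒱, (∑ E ∈ ℱ, wgt E) * (k : ℝ) * (2 : ℝ)⁻¹ ^ σ.length ≤
      ∑ E ∈ ℱ.filter (fun E => σ ∈ E), wgt E := by
  have hK := kraft_pf 𝒱 hpf
  have hδ : 0 ≤ ∑ E ∈ ℱ, wgt E := Finset.sum_nonneg hw
  apply Finset.exists_le_of_sum_le h𝒱
  rw [← Finset.mul_sum]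
  calc (∑ E ∈ ℱ, wgt E) * (k : ℝ) * ∑ σ ∈ 𝒱, (2 : ℝ)⁻¹ ^ σ.length
      ≤ (∑ E ∈ ℱ, wgt E) * (k : ℝ) := mul_le_of_le_one_right (by positivity) hK
    _ = ∑ E ∈ ℱ, wgt E * (k : ℝ) := Finset.sum_mul _ _ _
    _ ≤ ∑ E ∈ ℱ, wgt E * (E.card : ℝ) := Finset.sum_le_sum fun E hE =>
        mul_le_mul_of_nonneg_left (by exact_mod_cast hfat E hE) (hw E hE)
    _ = ∑ E ∈ ℱ, ∑ σ ∈ 𝒱, if σ ∈ E then wgt E else 0 := by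
        refine Finset.sum_congr rfl fun E hE => ?_
        rw [← Finset.sum_filter, Finset.filter_mem_eq_inter,
          Finset.inter_eq_right.2 (hsub E hE), Finset.sum_const, nsmul_eq_mul, mul_comm]
    _ = ∑ σ ∈ 𝒱, ∑ E ∈ ℱ.filter (fun E => σ ∈ E), wgt E := by
        rw [Finset.sum_comm]
        simp only [Finset.sum_filter]
end

section
/- If Q is a prefix-free set of strings and R is any set of strings, then μ(⟦Q∗R⟧) = μ(⟦Q⟧) · μ(⟦R⟧). -/
open MeasureTheory

/-- The first `n` bits of `x ∈ 2^ω`, as a string. -/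
def seg (x : ℕ → Bool) (n : ℕ) : List Bool := List.ofFn (fun i : Fin n => x i)

/-- The cylinder of a string: all `x ∈ 2^ω` with `σ` as a prefix. -/
def cyl (σ : List Bool) : Set (ℕ → Bool) := {x | seg x σ.length = σ}

/-- The open set generated by a set of strings. -/
def cylSet (V : Set (List Bool)) : Set (ℕ → Bool) := ⋃ σ ∈ V, cyl σ

/-- Concatenation of sets of strings: `Q∗R = {σ ++ ρ : σ ∈ Q, ρ ∈ R}`. -/
def starSet (Q R : Set (List Bool)) : Set (List Bool) :=
  {l | ∃ σ ∈ Q, ∃ ρ ∈ R, l = σ ++ ρ}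

lemma mem_cyl_iff (x : ℕ → Bool) (σ : List Bool) :
    x ∈ cyl σ ↔ ∀ i (h : i < σ.length), x i = σ[i] := by
  unfold cyl seg
  rw [Set.mem_setOf_eq, List.ext_getElem_iff]
  simp

lemma measurableSet_cyl (σ : List Bool) : MeasurableSet (cyl σ) := by
  have : cyl σ = ⋂ i : Fin σ.length, (fun x : ℕ → Bool => x i) ⁻¹' {σ[i]} := by
    ext x
    simp only [mem_cyl_iff, Set.mem_iInter, Set.mem_preimage, Set.mem_singleton_iff]
    constructor
    · intro H i; exact H i i.2
    · intro H i h; exact H ⟨i, h⟩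
  rw [this]
  exact MeasurableSet.iInter fun i => measurable_pi_apply _ (measurableSet_singleton _)

lemma prefix_of_mem_cyl {x : ℕ → Bool} {σ τ : List Bool} (h1 : x ∈ cyl σ) (h2 : x ∈ cyl τ)
    (h : σ.length ≤ τ.length) : σ <+: τ := by
  rw [mem_cyl_iff] at h1 h2
  rw [List.prefix_iff_getElem]
  refine ⟨h, fun i hi => ?_⟩
  rw [← h1 i hi, ← h2 i (by omega)]

lemma cyl_anti {σ τ : List Bool} (h : σ <+: τ) : cyl τ ⊆ cyl σ := by
  intro x hx
  rw [mem_cyl_iff] at hx ⊢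
  rw [List.prefix_iff_getElem] at h
  obtain ⟨hl, h⟩ := h
  intro i hi
  rw [hx i (by omega), h i hi]

lemma measure_iUnion_cyl (μ : Measure (ℕ → Bool))
    (hμ : ∀ σ : List Bool, μ (cyl σ) = (2 : ENNReal)⁻¹ ^ σ.length)
    {ι : Type} [Countable ι] (f : ι → List Bool) (hf : ∀ i j, f i <+: f j → i = j) :
    μ (⋃ i, cyl (f i)) = ∑' i, (2 : ENNReal)⁻¹ ^ (f i).length := by
  rw [measure_iUnion _ fun i => measurableSet_cyl _]
  · simp only [hμ]
  · intro i j hij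
    refine Set.disjoint_left.2 fun x hi hj => ?_
    rcases le_total (f i).length (f j).length with h | h
    · exact hij (hf _ _ (prefix_of_mem_cyl hi hj h))
    · exact hij (hf _ _ (prefix_of_mem_cyl hj hi h)).symm

/-- Minimal elements. -/
def minStr (R : Set (List Bool)) : Set (List Bool) := {ρ ∈ R | ∀ τ ∈ R, τ <+: ρ → τ = ρ}

lemma exists_minStr (R : Set (List Bool)) (n : ℕ) : ∀ ρ ∈ R, ρ.length = n →
    ∃ τ ∈ minStr R, τ <+: ρ := by
  induction n using Nat.strong_induction_on with
  | _ n ih =>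
    intro ρ hρ hn
    by_cases h : ∀ τ ∈ R, τ <+: ρ → τ = ρ
    · exact ⟨ρ, ⟨hρ, h⟩, List.prefix_rfl⟩
    · push Not at h
      obtain ⟨τ, hτ, hp, hne⟩ := h
      have hl : τ.length < n := by
        rcases lt_or_eq_of_le hp.length_le with h | h
        · omega
        · exact absurd (hp.eq_of_length h) hne
      obtain ⟨τ', h1, h2⟩ := ih _ hl τ hτ rfl
      exact ⟨τ', h1, h2.trans hp⟩

lemma cylSet_minStr (R : Set (List Bool)) : cylSet R = ⋃ ρ : minStr R, cyl ρ.1 := by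
  ext x
  simp only [cylSet, Set.mem_iUnion, exists_prop, Subtype.exists]
  constructor
  · rintro ⟨ρ, hρ, hx⟩
    obtain ⟨τ, h1, h2⟩ := exists_minStr R _ ρ hρ rfl
    exact ⟨τ, h1, cyl_anti h2 hx⟩
  · rintro ⟨ρ, hρ, hx⟩
    exact ⟨ρ, hρ.1, hx⟩

lemma cylSet_star (Q R : Set (List Bool)) :
    cylSet (starSet Q R) = ⋃ p : Q × minStr R, cyl (p.1.1 ++ p.2.1) := by
  ext x
  simp only [cylSet, Set.mem_iUnion, exists_prop]
  constructor
  · rintro ⟨_, ⟨σ, hσ, ρ, hρ, rfl⟩, hx⟩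
    obtain ⟨τ, h1, h2⟩ := exists_minStr R _ ρ hρ rfl
    exact ⟨(⟨σ, hσ⟩, ⟨τ, h1⟩), cyl_anti ((List.prefix_append_right_inj σ).2 h2) hx⟩
  · rintro ⟨⟨⟨σ, hσ⟩, ⟨ρ, hρ⟩⟩, hx⟩
    exact ⟨_, ⟨σ, hσ, ρ, hρ.1, rfl⟩, hx⟩

/-- If `Q` is a prefix-free set of strings and `R` is any set of strings,
then `μ(⟦Q∗R⟧) = μ(⟦Q⟧)·μ(⟦R⟧)`, where `μ` is the fair-coin measure on
`2^ω` (characterized by its values on cylinders). -/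
theorem measure_starSet (μ : Measure (ℕ → Bool))
    (hμ : ∀ σ : List Bool, μ (cyl σ) = (2 : ENNReal)⁻¹ ^ σ.length)
    (Q R : Set (List Bool))
    (hQ : ∀ σ ∈ Q, ∀ τ ∈ Q, σ <+: τ → σ = τ) :
    μ (cylSet (starSet Q R)) = μ (cylSet Q) * μ (cylSet R) := by
  have hQ' : cylSet Q = ⋃ σ : Q, cyl σ.1 := by
    simp only [cylSet, Set.iUnion_subtype]
  rw [cylSet_star, cylSet_minStr R, hQ', measure_iUnion_cyl μ hμ, measure_iUnion_cyl μ hμ,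
    measure_iUnion_cyl μ hμ, ENNReal.tsum_prod (f := fun (σ : Q) (ρ : minStr R) => (2 : ENNReal)⁻¹ ^ (σ.1 ++ ρ.1).length),
     ← ENNReal.tsum_mul_right]
  · refine tsum_congr fun σ => ?_
    rw [← ENNReal.tsum_mul_left]
    refine tsum_congr fun ρ => ?_
    rw [List.length_append, pow_add]
  · rintro ⟨ρ, hρ⟩ ⟨τ, hτ⟩ h
    exact Subtype.ext (hτ.2 _ hρ.1 h)
  · rintro ⟨σ, hσ⟩ ⟨τ, hτ⟩ h
    exact Subtype.ext (hQ _ hσ _ hτ h)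
  · rintro ⟨⟨σ, hσ⟩, ⟨ρ, hρ⟩⟩ ⟨⟨σ', hσ'⟩, ⟨ρ', hρ'⟩⟩ h
    simp only at h
    have e : σ = σ' := by
      rcases List.prefix_or_prefix_of_prefix ((List.prefix_append σ ρ).trans h)
        (List.prefix_append σ' ρ') with h | h
      · exact hQ _ hσ _ hσ' h
      · exact (hQ _ hσ' _ hσ h).symm
    subst e
    have e2 : ρ = ρ' := hρ'.2 _ hρ.1 ((List.prefix_append_right_inj σ).1 h)
    subst e2
    rfl
end

section
/- If Q is a prefix-free set of strings with μ(⟦Q⟧) < 1, then the set ⋂_{n ≥ 1} ⟦Q^n⟧ is μ-null. -/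
open MeasureTheory

/-- Iterated concatenation: `Q^1 = Q`, `Q^{n+1} = Q^n ∗ Q`
(with `Q^0 = {[]}`, the empty string). -/
def powSet (Q : Set (List Bool)) : ℕ → Set (List Bool)
  | 0 => {[]}
  | n + 1 => starSet (powSet Q n) Q

lemma seg_prefix (x : ℕ → Bool) {m n : ℕ} (h : m ≤ n) : seg x m <+: seg x n := by
  have : seg x m = (seg x n).take m := by
    apply List.ext_getElem
    · simp [seg, h]
    · intro i h1 h2
      simp [seg]
  rw [this]
  exact List.take_prefix _ _

noncomputable def wt (V : Set (List Bool)) : ENNReal := ∑' σ : V, (2 : ENNReal)⁻¹ ^ (σ : List Bool).length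

lemma wt_star (Q R : Set (List Bool)) : wt (starSet Q R) ≤ wt Q * wt R := by
  have h : ∀ l : starSet Q R, ∃ p : Q × R, (l : List Bool) = p.1.1 ++ p.2.1 := by
    rintro ⟨l, σ, hσ, ρ, hρ, rfl⟩
    exact ⟨(⟨σ, hσ⟩, ⟨ρ, hρ⟩), rfl⟩
  choose f hf using h
  have hinj : Function.Injective f := by
    intro a b hab
    apply Subtype.ext
    rw [hf a, hf b, hab]
  calc wt (starSet Q R)
      = ∑' l : starSet Q R, (fun p : Q × R =>
          (2 : ENNReal)⁻¹ ^ p.1.1.length * (2 : ENNReal)⁻¹ ^ p.2.1.length) (f l) := by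
        unfold wt
        refine tsum_congr fun l => ?_
        rw [hf l, List.length_append, pow_add]
    _ ≤ ∑' p : Q × R, (2 : ENNReal)⁻¹ ^ p.1.1.length * (2 : ENNReal)⁻¹ ^ p.2.1.length :=
        ENNReal.tsum_comp_le_tsum_of_injective hinj _
    _ = wt Q * wt R := by
        rw [ENNReal.tsum_prod']
        simp only [ENNReal.tsum_mul_left, ENNReal.tsum_mul_right]
        rfl

lemma wt_pow (Q : Set (List Bool)) (n : ℕ) : wt (powSet Q n) ≤ wt Q ^ n := by
  induction n with
  | zero =>
    have : wt {[]} = 1 := by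
      unfold wt
      rw [tsum_singleton ([] : List Bool) (fun σ : List Bool => (2 : ENNReal)⁻¹ ^ σ.length)]
      simp
    simp [powSet, this]
  | succ n ih =>
    rw [pow_succ]
    exact (wt_star _ _).trans (by gcongr)

/-- If `Q` is a prefix-free set of strings with `μ(⟦Q⟧) < 1`, then
`⋂_{n ≥ 1} ⟦Q^n⟧` is `μ`-null, where `μ` is the fair-coin measure on `2^ω`
(characterized by its values on cylinders). -/
theorem inter_powSet_null (μ : Measure (ℕ → Bool))
    (hμ : ∀ σ : List Bool, μ (cyl σ) = (2 : ENNReal)⁻¹ ^ σ.length)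
    (Q : Set (List Bool))
    (hQ : ∀ σ ∈ Q, ∀ τ ∈ Q, σ <+: τ → σ = τ)
    (hlt : μ (cylSet Q) < 1) :
    μ (⋂ n : ℕ, cylSet (powSet Q (n + 1))) = 0 := by
  have hle : ∀ V : Set (List Bool), μ (cylSet V) ≤ wt V := by
    intro V
    refine (measure_biUnion_le μ (Set.to_countable V) _).trans (le_of_eq ?_)
    exact tsum_congr fun σ => hμ _
  have heq : μ (cylSet Q) = wt Q := by
    unfold cylSet
    rw [measure_biUnion (Set.to_countable Q) ?_ (fun σ _ => measurableSet_cyl σ)]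
    · exact tsum_congr fun σ => hμ _
    · intro σ hσ τ hτ hne
      refine Set.disjoint_left.2 fun x hx hy => hne ?_
      have hx' : seg x σ.length = σ := hx
      have hy' : seg x τ.length = τ := hy
      rcases le_total σ.length τ.length with h | h
      · have := seg_prefix x h
        rw [hx', hy'] at this
        exact hQ σ hσ τ hτ this
      · have := seg_prefix x h
        rw [hx', hy'] at this
        exact (hQ τ hτ σ hσ this).symm
  rw [heq] at hlt
  have hb : ∀ n : ℕ, μ (⋂ n : ℕ, cylSet (powSet Q (n + 1))) ≤ wt Q ^ (n + 1) := fun n =>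
    (measure_mono (Set.iInter_subset _ n)).trans ((hle _).trans (wt_pow Q _))
  have ht := (Filter.tendsto_add_atTop_iff_nat 1).2
    (ENNReal.tendsto_pow_atTop_nhds_zero_of_lt_one hlt)
  exact le_antisymm (ge_of_tendsto' ht hb) bot_le
end

section
/- For every measurable set A ⊆ 2^ω and μ-almost every x ∈ A, the limit as n → ∞ of 2^n · μ(A ∩ ⟦x↾n⟧) equals 1. -/
open MeasureTheory Filter

/-- **Lebesgue density theorem for Cantor space.**
For every measurable `A ⊆ 2^ω` and `μ`-almost every `x ∈ A`,
`2^n · μ(A ∩ ⟦x↾n⟧) → 1` as `n → ∞`, where `μ` is the fair-coin measure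
(characterized by its values on cylinders). -/
theorem lebesgue_density (μ : Measure (ℕ → Bool))
    (hμ : ∀ σ : List Bool, μ (cyl σ) = (2 : ENNReal)⁻¹ ^ σ.length)
    (A : Set (ℕ → Bool)) (hA : MeasurableSet A) :
    ∀ᵐ x ∂μ, x ∈ A →
      Tendsto (fun n : ℕ => (2 : ℝ) ^ n * (μ (A ∩ cyl (seg x n))).toReal)
        atTop (nhds 1) := by
  have hprob : IsProbabilityMeasure μ := by
    refine ⟨?_⟩
    have h := hμ []
    have h2 : cyl [] = Set.univ := by
      ext y; simp [cyl, seg]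
    rw [h2] at h
    simpa using h
  let p : (n : ℕ) → (ℕ → Bool) → (Fin n → Bool) := fun n x i => x i
  have hp : ∀ n, Measurable (p n) := fun n => by
    refine measurable_pi_lambda _ (fun i => measurable_pi_apply _)
  have hcyl : ∀ x n, cyl (seg x n) = p n ⁻¹' {p n x} := by
    intro x n
    have hl : (seg x n).length = n := by simp [seg]
    ext y
    simp only [cyl, Set.mem_setOf_eq, hl, Set.mem_preimage, Set.mem_singleton_iff]
    exact List.ofFn_injective.eq_iff
  let F : Filtration ℕ (MeasurableSpace.pi : MeasurableSpace (ℕ → Bool)) :=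
    { seq := fun n => MeasurableSpace.comap (p n) inferInstance
      mono' := by
        intro m n hmn
        have : p m = (fun (z : Fin n → Bool) (i : Fin m) => z (Fin.castLE hmn i)) ∘ p n := by
          funext x i; rfl
        change MeasurableSpace.comap (p m) _ ≤ MeasurableSpace.comap (p n) _
        rw [this, ← MeasurableSpace.comap_comp]
        exact MeasurableSpace.comap_mono (Measurable.of_discrete).comap_le
      le' := fun n => (hp n).comap_le }
  have hsup : (⨆ n, F n) = (MeasurableSpace.pi : MeasurableSpace (ℕ → Bool)) := by
    refine le_antisymm (iSup_le F.le) ?_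
    refine iSup_le fun i => ?_
    refine le_trans ?_ (le_iSup (fun n => F n) (i + 1))
    have : (fun x : ℕ → Bool => x i) =
      (fun z : Fin (i + 1) → Bool => z (Fin.last i)) ∘ p (i + 1) := by
      funext x; rfl
    rw [this, ← MeasurableSpace.comap_comp]
    exact MeasurableSpace.comap_mono (Measurable.of_discrete).comap_le
  have hint : Integrable (A.indicator (fun _ => (1 : ℝ))) μ :=
    (integrable_const 1).indicator hA
  have key : ∀ n x, (μ[A.indicator (fun _ => (1 : ℝ)) | F n]) x
      = (2 : ℝ) ^ n * (μ (A ∩ cyl (seg x n))).toReal := by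
    intro n x
    set g := μ[A.indicator (fun _ => (1 : ℝ)) | F n] with hg
    have hgm : Measurable[F n] g := stronglyMeasurable_condExp.measurable
    obtain ⟨h, -, hh⟩ := Measurable.exists_eq_measurable_comp hgm
    have hS : MeasurableSet[F n] (cyl (seg x n)) := by
      rw [hcyl]
      exact ⟨{p n x}, MeasurableSet.of_discrete, rfl⟩
    have h1 := setIntegral_condExp (F.le n) hint hS
    have h2 : ∫ y in cyl (seg x n), g y ∂μ = ∫ y in cyl (seg x n), g x ∂μ := by
      refine setIntegral_congr_fun (F.le n _ hS) ?_
      intro y hy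
      rw [hcyl] at hy
      have hy' : p n y = p n x := hy
      simp only [hh, Function.comp, hy']
    rw [← hg, h2, setIntegral_const, setIntegral_indicator hA, setIntegral_const] at h1
    have h3 : μ.real (cyl (seg x n)) = ((2 : ℝ) ^ n)⁻¹ := by
      simp [Measure.real, hμ, seg]
    rw [h3, Set.inter_comm] at h1
    simp only [smul_eq_mul, mul_one, Measure.real] at h1
    rw [← h1]
    field_simp
  have hlim := Integrable.tendsto_ae_condExp (ℱ := F) hint (by
    rw [hsup]
    exact (measurable_const.indicator hA).stronglyMeasurable)
  filter_upwards [hlim] with x hx hxA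
  simp only [key, Set.indicator_of_mem hxA] at hx
  exact hx
end

section
/- Let k be a natural number, a ≥ 0 a real, and for each string σ of length k let H_σ ⊆ 2^ω be measurable with Σ_{σ of length k} μ(H_σ) ≤ a. Let M be a positive integer with 2a < M, and let W ⊆ 2^ω be measurable with μ(W) > 3/4. Then there exists a set D of strings of length k with |D| ≤ M such that μ(W ∩ {x ∈ 2^ω : every string σ of length k with x ∈ H_σ belongs to D}) > 2^{−2^k − 2}. -/
open MeasureTheory

/-- **Hitting-set selection.**
Let `H_σ ⊆ 2^ω` (for each string `σ` of length `k`) be measurable sets with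
total measure at most `a`, let `M` be a positive integer with `2a < M`, and
let `W` be measurable with `μ(W) > 3/4`.  Then there is a set `D` of at most
`M` strings of length `k` such that the set of `x ∈ W` for which every
length-`k` string `σ` with `x ∈ H_σ` lies in `D` has measure `> 2^{-2^k-2}`.
(`μ` is the fair-coin measure, characterized by its values on cylinders;
the sum over the strings of length `k` is indexed by `Fin k → Bool`.) -/
theorem hitting_selection (μ : Measure (ℕ → Bool))
    (hμ : ∀ σ : List Bool, μ (cyl σ) = (2 : ENNReal)⁻¹ ^ σ.length)
    (k : ℕ) (a : ℝ) (ha : 0 ≤ a)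
    (H : List Bool → Set (ℕ → Bool))
    (hHm : ∀ σ : List Bool, σ.length = k → MeasurableSet (H σ))
    (hsum : ∑ f : Fin k → Bool, μ (H (List.ofFn f)) ≤ ENNReal.ofReal a)
    (M : ℕ) (hM : 0 < M) (haM : 2 * a < M)
    (W : Set (ℕ → Bool)) (hWm : MeasurableSet W)
    (hW : (3 / 4 : ENNReal) < μ W) :
    ∃ D : Finset (List Bool), (∀ σ ∈ D, σ.length = k) ∧ D.card ≤ M ∧
      (2 : ENNReal)⁻¹ ^ (2 ^ k + 2) <
        μ (W ∩ {x | ∀ σ : List Bool, σ.length = k → x ∈ H σ → σ ∈ D}) := by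
  classical
  by_contra hcon
  push Not at hcon
  set N : (ℕ → Bool) → ENNReal :=
    fun x => ∑ f : Fin k → Bool, (H (List.ofFn f)).indicator (fun _ => (1 : ENNReal)) x with hN
  have hHm' : ∀ f : Fin k → Bool, MeasurableSet (H (List.ofFn f)) :=
    fun f => hHm _ (List.length_ofFn)
  have hmeas : Measurable N :=
    Finset.measurable_sum _ (fun f _ => measurable_const.indicator (hHm' f))
  have hint : ∫⁻ x, N x ∂μ ≤ ENNReal.ofReal a := by
    refine le_trans (le_of_eq ?_) hsum
    rw [hN, lintegral_finsetSum _ (fun f _ => measurable_const.indicator (hHm' f))]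
    refine Finset.sum_congr rfl (fun f _ => ?_)
    rw [lintegral_indicator_const (hHm' f), one_mul]
  have hM0 : (M : ENNReal) ≠ 0 := by exact_mod_cast hM.ne'
  have hMt : (M : ENNReal) ≠ ⊤ := ENNReal.natCast_ne_top M
  have hmk : μ {x | (M : ENNReal) ≤ N x} ≤ 2⁻¹ := by
    have h1 := (meas_ge_le_lintegral_div (μ := μ) hmeas.aemeasurable hM0 hMt)
    refine h1.trans ?_
    refine ENNReal.div_le_of_le_mul (hint.trans ?_)
    have h2 : ENNReal.ofReal a ≤ ENNReal.ofReal (2⁻¹ * (M : ℝ)) :=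
      ENNReal.ofReal_le_ofReal (by linarith)
    refine h2.trans (le_of_eq ?_)
    rw [ENNReal.ofReal_mul (by norm_num), ENNReal.ofReal_natCast,
      ENNReal.ofReal_inv_of_pos (by norm_num)]
    norm_num
  let E : Finset (Fin k → Bool) → Set (ℕ → Bool) := fun T =>
    if T.card ≤ M then
      W ∩ {x | ∀ σ : List Bool, σ.length = k → x ∈ H σ → σ ∈ T.image (fun f => List.ofFn f)}
    else ∅
  have hE : ∀ T, μ (E T) ≤ (2 : ENNReal)⁻¹ ^ (2 ^ k + 2) := by
    intro T
    by_cases hT : T.card ≤ M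
    · simp only [E, if_pos hT]
      refine hcon _ ?_ (Finset.card_image_le.trans hT)
      intro σ hσ
      obtain ⟨f, _, rfl⟩ := Finset.mem_image.1 hσ
      exact List.length_ofFn
    · simp [E, if_neg hT]
  have hcov : W ⊆ {x | (M : ENNReal) ≤ N x} ∪ ⋃ T, E T := by
    intro x hx
    by_cases hxM : (M : ENNReal) ≤ N x
    · exact Or.inl hxM
    right
    refine Set.mem_iUnion.2 ⟨Finset.univ.filter (fun f => x ∈ H (List.ofFn f)), ?_⟩
    have hc : (Finset.univ.filter (fun f : Fin k → Bool => x ∈ H (List.ofFn f))).card ≤ M := by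
      have : N x = ((Finset.univ.filter
          (fun f : Fin k → Bool => x ∈ H (List.ofFn f))).card : ENNReal) := by
        simp [hN, Set.indicator_apply, Finset.sum_boole]
      rw [this] at hxM
      have h3 := (not_le.1 hxM).le
      exact_mod_cast h3
    simp only [E, if_pos hc]
    refine ⟨hx, ?_⟩
    intro σ hσ hxσ
    subst hσ
    refine Finset.mem_image.2 ⟨σ.get, ?_, List.ofFn_get σ⟩
    refine Finset.mem_filter.2 ⟨Finset.mem_univ _, ?_⟩
    rw [List.ofFn_get]
    exact hxσ
  have hU : μ (⋃ T, E T) ≤ 4⁻¹ := by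
    calc μ (⋃ T, E T) ≤ ∑ T, μ (E T) := measure_iUnion_fintype_le μ E
      _ ≤ ∑ _T : Finset (Fin k → Bool), (2 : ENNReal)⁻¹ ^ (2 ^ k + 2) :=
          Finset.sum_le_sum (fun T _ => hE T)
      _ = 2 ^ (2 ^ k) * (2 : ENNReal)⁻¹ ^ (2 ^ k + 2) := by simp
      _ = 4⁻¹ := by
          rw [pow_add, ← mul_assoc, ← mul_pow,
            ENNReal.mul_inv_cancel (by norm_num) (by norm_num), one_pow, one_mul,
            ← ENNReal.inv_pow]
          norm_num
  have hfin : μ W ≤ 2⁻¹ + 4⁻¹ :=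
    (measure_mono hcov).trans ((measure_union_le _ _).trans (add_le_add hmk hU))
  have h34 : (2⁻¹ + 4⁻¹ : ENNReal) = 3 / 4 := by
    rw [← ENNReal.toReal_eq_toReal_iff' (by finiteness) (by finiteness),
      ENNReal.toReal_add (by finiteness) (by finiteness)]
    norm_num
  exact absurd hW (not_lt.2 (h34 ▸ hfin))
end
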